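/- arXiv:2504.11638 — 2 statements merged into one kernel-verified Lean document; each statement's English description precedes it below -/
import Mathlib

section
/- Let k ≥ 1 and let μ be the product of k copies of the uniform probability measure on [0,1]. Then for every real x with 0 ≤ x ≤ k, μ({u ∈ [0,1]^k : Σ_{i=1}^k u_i ≤ x}) = (1/k!) Σ_{j=0}^{⌊x⌋} (−1)^j C(k,j) (x − j)^k (the Irwin–Hall cumulative distribution function). -/
open MeasureTheory

/-- The uniform probability measure on the interval `[a,b]`. -/
noncomputable def unif (a b : ℝ) : Measure ℝ :=
  (volume (Set.Icc a b))⁻¹ • volume.restrict (Set.Icc a b)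

/-- Truncated power. -/
noncomputable def tpow (k : ℕ) (t : ℝ) : ℝ := if 0 ≤ t then t ^ k else 0

lemma tpow_mono (k : ℕ) : Monotone (tpow k) := by
  intro a b hab
  unfold tpow
  split_ifs with h1 h2 h2
  · exact pow_le_pow_left₀ h1 hab k
  · linarith
  · positivity
  · exact le_rfl

lemma tpow_ii (k : ℕ) (a b : ℝ) : IntervalIntegrable (tpow k) volume a b :=
  (tpow_mono k).intervalIntegrable

lemma tpow_int0 (k : ℕ) (b : ℝ) : ∫ t in (0:ℝ)..b, tpow k t = tpow (k+1) b / (k+1) := by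
  rcases le_or_gt 0 b with hb | hb
  · have : ∫ t in (0:ℝ)..b, tpow k t = ∫ t in (0:ℝ)..b, t ^ k := by
      apply intervalIntegral.integral_congr
      intro t ht
      rw [Set.uIcc_of_le hb] at ht
      simp [tpow, ht.1]
    rw [this, integral_pow]
    simp [tpow, hb]
  · rw [intervalIntegral.integral_symm, intervalIntegral.integral_of_le hb.le,
      integral_Ioc_eq_integral_Ioo]
    have : ∫ t in Set.Ioo b 0, tpow k t = ∫ t in Set.Ioo b 0, (0:ℝ) := by
      apply setIntegral_congr_fun measurableSet_Ioo
      intro t ht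
      simp [tpow, ht.2]
    rw [this]
    simp [tpow, not_le.mpr hb]

lemma tpow_int (k : ℕ) (x : ℝ) :
    ∫ u in (0:ℝ)..1, tpow k (x - u) = (tpow (k+1) x - tpow (k+1) (x-1)) / (k+1) := by
  rw [intervalIntegral.integral_comp_sub_left (fun t => tpow k t) x,
    ← intervalIntegral.integral_interval_sub_left (tpow_ii k 0 _) (tpow_ii k 0 _),
    tpow_int0, tpow_int0, sub_zero, sub_div]

lemma unif01 : unif 0 1 = volume.restrict (Set.Icc (0:ℝ) 1) := by
  simp [unif]

instance : IsProbabilityMeasure (unif 0 1) := by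
  rw [unif01]; exact ⟨by simp⟩

lemma step_meas (k : ℕ) (x : ℝ) :
    ((Measure.pi fun _ : Fin (k+1) => unif 0 1) {u | ∑ i, u i ≤ x}).toReal =
      ∫ u in (0:ℝ)..1,
        ((Measure.pi fun _ : Fin k => unif 0 1) {v | ∑ i, v i ≤ x - u}).toReal := by
  have hS : MeasurableSet {p : ℝ × (Fin k → ℝ) | p.1 + ∑ i, p.2 i ≤ x} :=
    measurableSet_le (by fun_prop) (by fun_prop)
  have h := (measurePreserving_piFinSuccAbove (fun _ : Fin (k+1) => unif 0 1) 0).measure_preimage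
    hS.nullMeasurableSet
  have e : (MeasurableEquiv.piFinSuccAbove (fun _ : Fin (k+1) => ℝ) 0) ⁻¹'
      {p : ℝ × (Fin k → ℝ) | p.1 + ∑ i, p.2 i ≤ x} = {u | ∑ i, u i ≤ x} := by
    ext u
    simp [Fin.sum_univ_succ, MeasurableEquiv.piFinSuccAbove, Fin.insertNthEquiv, Fin.tail]
  rw [e] at h
  rw [h, Measure.prod_apply hS, ← integral_toReal]
  · rw [intervalIntegral.integral_of_le zero_le_one, ← integral_Icc_eq_integral_Ioc, ← unif01]
    congr 1
    ext u
    congr 2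
    ext v
    simp [le_sub_iff_add_le, add_comm]
  · exact (measurable_measure_prodMk_left hS).aemeasurable
  · exact Filter.Eventually.of_forall fun u => measure_lt_top _ _

lemma main_formula (k : ℕ) : ∀ x : ℝ,
    ((Measure.pi fun _ : Fin k => unif 0 1) {u | ∑ i, u i ≤ x}).toReal =
      (1 / (k.factorial : ℝ)) *
        ∑ j ∈ Finset.range (k + 1), (-1 : ℝ) ^ j * (k.choose j : ℝ) * tpow k (x - j) := by
  induction k with
  | zero =>
    intro x
    by_cases h : 0 ≤ x <;> simp [tpow, h]
  | succ k ih =>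
    intro x
    rw [step_meas]
    simp_rw [ih]
    rw [intervalIntegral.integral_const_mul, intervalIntegral.integral_finsetSum]
    · have h1 : ∀ j : ℕ, ∫ u in (0:ℝ)..1, (-1 : ℝ) ^ j * (k.choose j : ℝ) * tpow k (x - u - j) =
          (-1 : ℝ) ^ j * (k.choose j : ℝ) *
            (tpow (k+1) (x - j) - tpow (k+1) (x - (j+1 : ℕ))) / (k+1) := by
        intro j
        rw [intervalIntegral.integral_const_mul, mul_div_assoc]
        have := tpow_int k (x - j)
        rw [show x - ((j+1 : ℕ):ℝ) = x - j - 1 by push_cast; ring, ← this]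
        simp_rw [sub_right_comm]
      simp_rw [h1]
      rw [← Finset.sum_div, Nat.factorial_succ]
      have h2 : ∑ j ∈ Finset.range (k+1), (-1 : ℝ) ^ j * (k.choose j : ℝ) *
            (tpow (k+1) (x - j) - tpow (k+1) (x - (j+1 : ℕ))) =
          ∑ j ∈ Finset.range (k + 1 + 1),
            (-1 : ℝ) ^ j * ((k+1).choose j : ℝ) * tpow (k+1) (x - j) := by
        simp_rw [mul_sub]
        rw [Finset.sum_sub_distrib, Finset.sum_range_succ' _ (k+1)]
        have h3 := Finset.sum_range_succ
          (fun j : ℕ => (-1 : ℝ) ^ j * (k.choose j : ℝ) * tpow (k+1) (x - j)) (k+1)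
        rw [Finset.sum_range_succ'] at h3
        simp only [Nat.choose_succ_self, Nat.cast_zero, mul_zero, zero_mul, add_zero] at h3
        rw [← h3]
        simp_rw [Nat.choose_succ_succ]
        push_cast
        simp only [mul_add, add_mul, Finset.sum_add_distrib, pow_succ, mul_neg, neg_mul,
          Finset.sum_neg_distrib, mul_one, Nat.choose_zero_right]
        ring
      rw [h2]
      push_cast
      field_simp
    · intro j _
      apply IntervalIntegrable.const_mul
      have := (tpow_mono k)
      have ha : Antitone (fun u : ℝ => tpow k (x - u - j)) := by
        intro a b hab
        exact this (by linarith)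
      exact ha.intervalIntegrable

/-- Irwin–Hall CDF.  If `μ` is the product of `k` copies of the uniform
measure on `[0,1]`, then for `0 ≤ x ≤ k`,
`μ {u : ∑ u i ≤ x} = (1/k!) ∑_{j=0}^{⌊x⌋} (-1)^j C(k,j) (x-j)^k`. -/
theorem stmt_2 (k : ℕ) (hk : 1 ≤ k) (μ : Measure (Fin k → ℝ))
    (hμ : μ = Measure.pi fun _ => unif 0 1)
    (x : ℝ) (hx0 : 0 ≤ x) (hxk : x ≤ (k : ℝ)) :
    (μ {u | ∑ i, u i ≤ x}).toReal =
      (1 / (k.factorial : ℝ)) *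
        ∑ j ∈ Finset.range (⌊x⌋₊ + 1), (-1 : ℝ) ^ j * (k.choose j : ℝ) * (x - j) ^ k := by
  rw [hμ, main_formula]
  congr 1
  have hf : ⌊x⌋₊ ≤ k := Nat.floor_le_of_le hxk
  symm
  rw [← Finset.sum_subset (Finset.range_mono (Nat.succ_le_succ hf))]
  · apply Finset.sum_congr rfl
    intro j hj
    have hj' : j ≤ ⌊x⌋₊ := Nat.lt_succ_iff.mp (Finset.mem_range.mp hj)
    have : (j:ℝ) ≤ x := (Nat.le_floor_iff hx0).mp hj'
    simp [tpow, this]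
  · intro j _ hj
    have hj' : ⌊x⌋₊ < j := by simpa [Nat.lt_succ_iff] using hj
    have : x < j := (Nat.floor_lt hx0).mp hj'
    simp [tpow, not_le.mpr this]
end

section
/- Let N ≥ 1, let 0 ≤ a < b, and let P be the product of N copies of the uniform probability measure on [a,b], with coordinates z_1,…,z_N and partial sums S_k = Σ_{i=1}^k z_i (S_0 = 0). Let γ > 0 satisfy γ ≥ (N−1)a, and define k* as the least k ∈ {1,…,N} with S_k ≥ γ, with k* = N if no such k exists. For each k ∈ {0,…,N−1} set γ'_k = (γ − ka)/(b − a) and γ*_k = min(max(⌊γ'_k⌋, 0), k). Then E[k*] = Σ_{k=0}^{N-1} (1/k!) Σ_{j=0}^{γ*_k} (−1)^j C(k,j) (min(γ'_k, k) − j)^k. -/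
open MeasureTheory
open scoped Classical

/-- Truncated power. -/
noncomputable def tp (k : ℕ) (x : ℝ) : ℝ := if 0 < x then x ^ k else 0

lemma tp_mono (k : ℕ) : Monotone (tp k) := by
  intro x y h
  unfold tp
  by_cases hx : 0 < x
  · rw [if_pos hx, if_pos (hx.trans_le h)]
    exact pow_le_pow_left₀ hx.le h k
  · rw [if_neg hx]
    split_ifs with hy
    · positivity
    · exact le_rfl

lemma tp_int0 (k : ℕ) (d : ℝ) : ∫ v in (0:ℝ)..d, tp k v = tp (k + 1) d / (k + 1) := by
  rcases le_or_gt d 0 with h | h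
  · have : ∫ v in (0:ℝ)..d, tp k v = ∫ v in (0:ℝ)..d, (0:ℝ) := by
      apply intervalIntegral.integral_congr_ae
      refine Filter.Eventually.of_forall fun v hv => ?_
      rw [Set.uIoc_of_ge h] at hv
      simp [tp, not_lt.2 hv.2]
    rw [this]
    simp [tp, not_lt.2 h]
  · have : ∫ v in (0:ℝ)..d, tp k v = ∫ v in (0:ℝ)..d, v ^ k := by
      apply intervalIntegral.integral_congr_ae
      refine Filter.Eventually.of_forall fun v hv => ?_
      rw [Set.uIoc_of_le h.le] at hv
      simp [tp, hv.1]
    rw [this, integral_pow]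
    simp [tp, h]

lemma tp_int (k : ℕ) (s a b : ℝ) :
    ∫ u in a..b, tp k (s - u) = (tp (k + 1) (s - a) - tp (k + 1) (s - b)) / (k + 1) := by
  rw [intervalIntegral.integral_comp_sub_left (fun v => tp k v) s,
    ← intervalIntegral.integral_interval_sub_left (a := 0) (tp_mono k).intervalIntegrable
      (tp_mono k).intervalIntegrable, tp_int0, tp_int0]
  ring

/-- Scaled Irwin–Hall distribution function. -/
noncomputable def IH (a b : ℝ) (k : ℕ) (t : ℝ) : ℝ :=
  (1 / ((k.factorial : ℝ) * (b - a) ^ k)) *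
    ∑ j ∈ Finset.range (k + 1), (-1 : ℝ) ^ j * (k.choose j : ℝ) * tp k (t - k * a - j * (b - a))

lemma pascal_sum (k : ℕ) (f : ℕ → ℝ) :
    ∑ j ∈ Finset.range (k + 1), (-1 : ℝ) ^ j * (k.choose j : ℝ) * (f j - f (j + 1)) =
    ∑ j ∈ Finset.range (k + 2), (-1 : ℝ) ^ j * ((k + 1).choose j : ℝ) * f j := by
  rw [Finset.sum_range_succ' _ (k + 1)]
  simp only [Nat.choose_succ_succ, Nat.cast_add, mul_sub, Finset.sum_sub_distrib]
  have h1 : ∑ j ∈ Finset.range (k + 1), (-1 : ℝ) ^ j * (k.choose j : ℝ) * f j =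
      ∑ j ∈ Finset.range (k + 1), (-1 : ℝ) ^ (j+1) * (k.choose (j+1) : ℝ) * f (j+1) + f 0 := by
    have := Finset.sum_range_succ' (fun j => (-1 : ℝ) ^ j * (k.choose j : ℝ) * f j) (k + 1)
    rw [Finset.sum_range_succ] at this
    simpa using this
  rw [h1]
  have h2 : ∀ j, (-1 : ℝ) ^ (j + 1) * ((k.choose j : ℝ) + (k.choose (j + 1) : ℝ)) * f (j + 1) =
     (-1 : ℝ) ^ (j+1) * (k.choose (j+1) : ℝ) * f (j+1) - (-1 : ℝ) ^ j * (k.choose j : ℝ) * f (j + 1) := by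
    intro j; ring
  simp only [h2, Finset.sum_sub_distrib]
  simp
  ring

lemma IH_int (a b : ℝ) (hab : a < b) (k : ℕ) (t : ℝ) :
    (b - a)⁻¹ * ∫ u in a..b, IH a b k (t - u) = IH a b (k + 1) t := by
  unfold IH
  rw [intervalIntegral.integral_const_mul, intervalIntegral.integral_finsetSum]
  · have : ∀ j : ℕ, ∫ u in a..b, (-1 : ℝ) ^ j * (k.choose j : ℝ) *
        tp k (t - u - k * a - j * (b - a)) = (k + 1 : ℝ)⁻¹ * ((-1 : ℝ) ^ j * (k.choose j : ℝ) *
        (tp (k + 1) (t - (k + 1 : ℕ) * a - j * (b - a)) -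
          tp (k + 1) (t - (k + 1 : ℕ) * a - (j + 1 : ℕ) * (b - a)))) := by
      intro j
      rw [intervalIntegral.integral_const_mul]
      have h1 : ∀ u : ℝ, t - u - k * a - j * (b - a) = (t - k * a - j * (b - a)) - u := by
        intro u; ring
      simp only [h1]
      rw [tp_int]
      have h2 : t - k * a - j * (b - a) - a = t - (k + 1 : ℕ) * a - j * (b - a) := by
        push_cast; ring
      have h3 : t - k * a - j * (b - a) - b = t - (k + 1 : ℕ) * a - (j + 1 : ℕ) * (b - a) := by
        push_cast; ring
      rw [h2, h3]
      ring
    simp only [this]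
    rw [← Finset.mul_sum,
      pascal_sum k (fun j => tp (k + 1) (t - (k + 1 : ℕ) * a - j * (b - a)))]
    have hb : b - a ≠ 0 := by linarith
    have hk : (k.factorial : ℝ) ≠ 0 := by positivity
    have hk1 : (k + 1 : ℝ) ≠ 0 := by positivity
    rw [Nat.factorial_succ]
    push_cast
    field_simp
    ring
  · intro j _
    apply IntervalIntegrable.const_mul
    have : Antitone fun u : ℝ => tp k (t - u - k * a - j * (b - a)) := by
      intro u v h
      exact tp_mono k (by linarith)
    exact this.intervalIntegrable

lemma IH_anti_meas (a b : ℝ) (k : ℕ) (t : ℝ) : Measurable fun u => IH a b k (t - u) := by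
  unfold IH
  have := (tp_mono k).measurable
  fun_prop

lemma unif_eq (a b : ℝ) : unif a b = (ENNReal.ofReal (b - a))⁻¹ • volume.restrict (Set.Ioc a b) := by
  rw [unif, Real.volume_Icc, ← MeasureTheory.restrict_Ioc_eq_restrict_Icc]

lemma unif_prob (a b : ℝ) (hab : a < b) : IsProbabilityMeasure (unif a b) := by
  constructor
  rw [unif_eq]
  simp only [Measure.smul_apply, Measure.restrict_apply MeasurableSet.univ, Set.univ_inter,
    Real.volume_Ioc, smul_eq_mul]
  apply ENNReal.inv_mul_cancel
  · simpa using hab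
  · simp

lemma unif_integral (a b : ℝ) (hab : a < b) (f : ℝ → ℝ) :
    ∫ x, f x ∂(unif a b) = (b - a)⁻¹ * ∫ u in a..b, f u := by
  rw [unif_eq, integral_smul_measure, intervalIntegral.integral_of_le hab.le, ENNReal.toReal_inv,
    ENNReal.toReal_ofReal (by linarith), smul_eq_mul]

lemma sum_split (M k : ℕ) (x : Fin (M + 1) → ℝ) :
    ∑ i ∈ Finset.univ.filter (fun i : Fin (M + 1) => (i : ℕ) < k + 1), x i =
    x 0 + ∑ i ∈ Finset.univ.filter (fun i : Fin M => (i : ℕ) < k), x i.succ := by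
  rw [Finset.sum_filter, Fin.sum_univ_succ, Finset.sum_filter]
  simp

lemma prob_eq (a b : ℝ) (hab : a < b) (k : ℕ) : ∀ (N : ℕ) (_ : k ≤ N) (t : ℝ),
    (Measure.pi fun _ : Fin N => unif a b).real
      {x | ∑ i ∈ Finset.univ.filter (fun i : Fin N => (i : ℕ) < k), x i < t} = IH a b k t := by
  have := unif_prob a b hab
  induction k with
  | zero =>
    intro N _ t
    by_cases ht : 0 < t <;> simp [IH, tp, ht]
  | succ k ih =>
    intro N hN t
    obtain ⟨M, rfl⟩ : ∃ M, N = M + 1 := ⟨N - 1, by omega⟩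
    have hmp := measurePreserving_piFinSuccAbove (fun _ : Fin (M + 1) => unif a b) 0
    set A : Set (ℝ × (Fin M → ℝ)) := {p | p.1 +
      ∑ i ∈ Finset.univ.filter (fun i : Fin M => (i : ℕ) < k), p.2 i < t} with hA
    have hAm : MeasurableSet A := by
      apply measurableSet_lt _ measurable_const
      fun_prop
    have hpre : {x : Fin (M + 1) → ℝ |
        ∑ i ∈ Finset.univ.filter (fun i : Fin (M + 1) => (i : ℕ) < k + 1), x i < t} =
        (MeasurableEquiv.piFinSuccAbove (fun _ : Fin (M + 1) => ℝ) 0) ⁻¹' A := by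
      ext x
      simp only [Set.mem_ofPred_eq, sum_split]
      rfl
    have hsec : ∀ u : ℝ, (Measure.pi fun _ : Fin M => unif a b) (Prod.mk u ⁻¹' A) =
        ENNReal.ofReal (IH a b k (t - u)) := by
      intro u
      rw [← ih M (by omega) (t - u), ofReal_measureReal]
      congr 1
      ext y
      simp only [hA, Set.mem_preimage, Set.mem_ofPred_eq]
      constructor <;> intro h <;> linarith
    have hnn : ∀ u, 0 ≤ IH a b k (t - u) := by
      intro u
      rw [← ih M (by omega) (t - u)]
      exact measureReal_nonneg
    have hle : ∀ u, IH a b k (t - u) ≤ 1 := by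
      intro u
      rw [← ih M (by omega) (t - u)]
      exact measureReal_le_one
    have hint : Integrable (fun u => IH a b k (t - u)) (unif a b) := by
      apply Integrable.of_bound (IH_anti_meas a b k t).aestronglyMeasurable 1
      refine Filter.Eventually.of_forall fun u => ?_
      rw [Real.norm_eq_abs, abs_of_nonneg (hnn u)]
      exact hle u
    rw [hpre, Measure.real, hmp.measure_preimage hAm.nullMeasurableSet, Measure.prod_apply hAm]
    simp only [hsec]
    rw [← ofReal_integral_eq_lintegral_ofReal hint (Filter.Eventually.of_forall hnn),
      ENNReal.toReal_ofReal (integral_nonneg hnn), unif_integral a b hab, IH_int a b hab]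

lemma alt_sum (k : ℕ) (x : ℝ) :
    ∑ j ∈ Finset.range (k + 1), (-1 : ℝ) ^ j * (k.choose j : ℝ) * (x - j) ^ k = k.factorial := by
  have h := congrFun (fwdDiff_iter_eq_factorial (R := ℝ) (n := k)) (x - k)
  rw [fwdDiff_iter_eq_sum_shift] at h
  rw [← Finset.sum_range_reflect] at h
  have h2 : ((k.factorial : ℝ → ℝ)) (x - k) = (k.factorial : ℝ) := by simp
  rw [h2] at h
  rw [← h]
  apply Finset.sum_congr rfl
  intro j hj
  have hj' : j ≤ k := by simpa [Nat.lt_succ_iff] using hj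
  have e1 : k + 1 - 1 - j = k - j := by omega
  have e2 : k - (k - j) = j := by omega
  rw [e1, e2, Nat.choose_symm hj', zsmul_eq_mul]
  push_cast [Nat.cast_sub hj']
  simp
  left
  rw [Nat.cast_sub hj']
  ring

lemma tp_scale (k : ℕ) (c x : ℝ) (hc : 0 < c) : tp k (c * x) = c ^ k * tp k x := by
  unfold tp
  by_cases hx : 0 < x
  · rw [if_pos hx, if_pos (by positivity), mul_pow]
  · rw [if_neg hx, if_neg (by simpa [hc] using hx), mul_zero]

lemma IH_formula (a b : ℝ) (hab : a < b) (k : ℕ) (γ : ℝ) (hγ : 0 < γ) (hk : k * a ≤ γ) :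
    IH a b k γ = (1 / (k.factorial : ℝ)) *
        ∑ j ∈ Finset.range ((min (max ⌊(γ - k * a) / (b - a)⌋ 0) (k : ℤ)).toNat + 1),
          (-1 : ℝ) ^ j * (k.choose j : ℝ) *
            (min ((γ - k * a) / (b - a)) (k : ℝ) - j) ^ k := by
  have hc : 0 < b - a := by linarith
  have hg0 : 0 ≤ (γ - k * a) / (b - a) := div_nonneg (by linarith) hc.le
  have key : IH a b k γ = (1 / (k.factorial : ℝ)) * ∑ j ∈ Finset.range (k + 1),
      (-1 : ℝ) ^ j * (k.choose j : ℝ) * tp k ((γ - k * a) / (b - a) - j) := by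
    unfold IH
    have : ∀ j : ℕ, tp k (γ - k * a - j * (b - a)) =
        (b - a) ^ k * tp k ((γ - k * a) / (b - a) - j) := by
      intro j
      rw [← tp_scale k _ _ hc]
      congr 1
      field_simp
    simp only [this]
    have h4 : ∀ j : ℕ, (-1 : ℝ) ^ j * (k.choose j : ℝ) *
        ((b - a) ^ k * tp k ((γ - k * a) / (b - a) - j)) = (b - a) ^ k * ((-1 : ℝ) ^ j *
        (k.choose j : ℝ) * tp k ((γ - k * a) / (b - a) - j)) := by intro j; ring
    simp only [h4]
    rw [← Finset.mul_sum]
    field_simp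
  rw [key]
  have hgp : k = 0 → 0 < (γ - k * a) / (b - a) := by
    rintro rfl
    apply div_pos _ hc
    simpa using hγ
  generalize (γ - k * a) / (b - a) = g at *
  congr 1
  rcases Nat.eq_zero_or_pos k with rfl | hk0
  · have hg := hgp rfl
    have : (min (max ⌊g⌋ 0) ((0 : ℕ) : ℤ)).toNat = 0 := by
      have := Int.floor_nonneg.2 hg0
      simp [this]
    rw [this]
    simp [tp, hg]
  have hfl := Int.floor_nonneg.2 hg0
  rw [max_eq_left hfl]
  rcases le_or_gt g k with h | h
  · have hfk : ⌊g⌋ ≤ (k : ℤ) := by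
      have := Int.floor_le_floor h
      simpa using this
    rw [min_eq_left hfk, min_eq_left h]
    symm
    have hn : (⌊g⌋.toNat : ℤ) = ⌊g⌋ := Int.toNat_of_nonneg hfl
    rw [← Finset.sum_subset (s₁ := Finset.range (⌊g⌋.toNat + 1)) (s₂ := Finset.range (k + 1))]
    · apply Finset.sum_congr rfl
      intro j hj
      rw [Finset.mem_range] at hj
      have hjg : (j : ℝ) ≤ g := by
        have h5 : (j : ℤ) ≤ ⌊g⌋ := by omega
        have := Int.le_floor.1 h5
        simpa using this
      congr 1
      unfold tp
      split_ifs with h6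
      · rfl
      · have : g - j = 0 := by linarith
        rw [this, zero_pow (by omega)]
    · intro j hj
      rw [Finset.mem_range] at *
      omega
    · intro j _ hj
      rw [Finset.mem_range] at hj
      have hjg : g < j := by
        have h5 : ⌊g⌋ < (j : ℤ) := by omega
        have := Int.floor_lt.1 h5
        simpa using this
      rw [tp, if_neg (by linarith), mul_zero]
  · have hfk : (k : ℤ) ≤ ⌊g⌋ := by
      apply Int.le_floor.2
      simpa using h.le
    rw [min_eq_right hfk, min_eq_right h.le, Int.toNat_natCast, alt_sum, ← alt_sum k g]
    apply Finset.sum_congr rfl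
    intro j hj
    have hj' : (j : ℝ) ≤ k := by
      rw [Finset.mem_range] at hj
      exact_mod_cast Nat.lt_succ_iff.1 hj
    rw [tp, if_pos (by linarith)]

/-- Exact expression for the expected number of transmissions for the
non-ordered sequential estimation scheme with i.i.d. uniform-`[a,b]` precisions:
`E[k*] = ∑_{k=0}^{N-1} (1/k!) ∑_{j=0}^{γ*_k} (-1)^j C(k,j) (min(γ'_k,k) - j)^k`,
where `γ'_k = (γ - k a)/(b - a)` and `γ*_k = min(max(⌊γ'_k⌋,0),k)`. -/
theorem stmt_3 (N : ℕ) (hN : 1 ≤ N) (a b : ℝ) (ha : 0 ≤ a) (hab : a < b)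
    (γ : ℝ) (hγ : 0 < γ) (hγa : (N - 1 : ℕ) * a ≤ γ)
    (P : Measure (Fin N → ℝ)) (hP : P = Measure.pi fun _ => unif a b)
    (S : ℕ → (Fin N → ℝ) → ℝ)
    (hS : ∀ k x, S k x = ∑ i ∈ Finset.univ.filter (fun i : Fin N => (i : ℕ) < k), x i)
    (kstar : (Fin N → ℝ) → ℕ)
    (hk : ∀ x, kstar x =
      if ∃ k, (1 ≤ k ∧ k ≤ N) ∧ γ ≤ S k x
      then sInf {k | (1 ≤ k ∧ k ≤ N) ∧ γ ≤ S k x}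
      else N) :
    ∫ x, (kstar x : ℝ) ∂P =
      ∑ k ∈ Finset.range N, (1 / (k.factorial : ℝ)) *
        ∑ j ∈ Finset.range ((min (max ⌊(γ - k * a) / (b - a)⌋ 0) (k : ℤ)).toNat + 1),
          (-1 : ℝ) ^ j * (k.choose j : ℝ) *
            (min ((γ - k * a) / (b - a)) (k : ℝ) - j) ^ k := by
  have hpu := unif_prob a b hab
  have hSm : ∀ k, MeasurableSet {x | S k x < γ} := by
    intro k
    have hm : Measurable (S k) := by
      rw [show S k = _ from funext (hS k)]
      fun_prop
    exact measurableSet_lt hm measurable_const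
  have hprob : IsProbabilityMeasure P := by rw [hP]; infer_instance
  have hpos : ∀ᵐ x ∂P, ∀ i, 0 ≤ x i := by
    rw [hP]
    have h0 : ∀ᵐ u ∂(unif a b), 0 ≤ u := by
      rw [unif_eq]
      apply Measure.ae_smul_measure
      rw [ae_restrict_iff' measurableSet_Ioc]
      exact Filter.Eventually.of_forall fun u hu => ha.trans hu.1.le
    rw [Filter.eventually_all]
    intro i
    exact (Measure.tendsto_eval_ae_ae (μ := fun _ : Fin N => unif a b) (i := i)).eventually h0
  have hsum : (fun x => (kstar x : ℝ)) =ᵐ[P] fun x =>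
      ∑ k ∈ Finset.range N, Set.indicator {x | S k x < γ} (fun _ => (1 : ℝ)) x := by
    filter_upwards [hpos] with x hx
    have hmono : Monotone fun k => S k x := by
      intro k l hkl
      simp only [hS]
      apply Finset.sum_le_sum_of_subset_of_nonneg
      · intro i
        simp only [Finset.mem_filter, Finset.mem_univ, true_and]
        omega
      · intro i _ _
        exact hx i
    have h0 : S 0 x = 0 := by rw [hS]; simp
    have hle : kstar x ≤ N := by
      rw [hk]
      split_ifs with h
      · exact (Nat.sInf_mem h).1.2
      · exact le_rfl
    have hiff : ∀ k ∈ Finset.range N, (S k x < γ ↔ k < kstar x) := by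
      intro k hkN
      rw [Finset.mem_range] at hkN
      rw [hk]
      split_ifs with h
      · have hm := Nat.sInf_mem (s := {k | (1 ≤ k ∧ k ≤ N) ∧ γ ≤ S k x}) h
        constructor
        · intro hlt
          by_contra hcon
          have := hmono (not_lt.1 hcon)
          have h2 := hm.2
          simp only at this
          linarith
        · intro hlt
          by_contra hcon
          apply Nat.notMem_of_lt_sInf hlt
          refine ⟨⟨?_, hkN.le⟩, not_lt.1 hcon⟩
          rcases Nat.eq_zero_or_pos k with rfl | h1
          · rw [h0] at hcon
            exact absurd hγ hcon
          · exact h1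
      · refine ⟨fun _ => hkN, fun _ => ?_⟩
        by_contra hcon
        rcases Nat.eq_zero_or_pos k with rfl | h1
        · rw [h0] at hcon
          exact absurd hγ hcon
        · exact h ⟨k, ⟨h1, hkN.le⟩, not_lt.1 hcon⟩
    simp only [Set.indicator_apply, Set.mem_ofPred_eq]
    rw [Finset.sum_congr rfl (g := fun k => if k < kstar x then (1 : ℝ) else 0)
      (fun k hk' => by simp only [hiff k hk'])]
    rw [← Finset.sum_filter]
    have : Finset.filter (fun k => k < kstar x) (Finset.range N) = Finset.range (kstar x) := by
      ext k
      simp only [Finset.mem_filter, Finset.mem_range]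
      omega
    rw [this]
    simp
  rw [integral_congr_ae hsum, integral_finsetSum]
  · apply Finset.sum_congr rfl
    intro k hkN
    rw [Finset.mem_range] at hkN
    rw [integral_indicator_const _ (hSm k), smul_eq_mul, mul_one]
    rw [← IH_formula a b hab k γ hγ, ← prob_eq a b hab k N hkN.le γ, hP]
    · simp only [hS]
    · refine le_trans ?_ hγa
      apply mul_le_mul_of_nonneg_right _ ha
      exact_mod_cast (by omega : k ≤ N - 1)
  · intro k _
    exact (integrable_const (1 : ℝ)).indicator (hSm k)
end
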